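/- arXiv:math/0407335 — 5 statements merged into one kernel-verified Lean document; each statement's English description precedes it below -/
import Mathlib

section
/- Let k be an infinite field and let r ≥ 2. Then the set { tr(g)·tr(g⁻¹) : g ∈ SL_r(k) } is an infinite subset of k. (This expresses that the trace of the adjoint representation defines a dominant, in particular non-constant, morphism SL_r → 𝔸¹.) -/
theorem adj_trace_exists_aux (k : Type*) [Field k] (m : ℕ) (t : k) :
    ∃ g : Matrix.SpecialLinearGroup (Fin (2 + m)) k,
      Matrix.trace ((g : Matrix (Fin (2 + m)) (Fin (2 + m)) k)) = t + m ∧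
      Matrix.trace ((g⁻¹ : Matrix.SpecialLinearGroup (Fin (2 + m)) k) :
        Matrix (Fin (2 + m)) (Fin (2 + m)) k) = t + m := by
  let e : Fin (2 + m) ≃ Fin 2 ⊕ Fin m := finSumFinEquiv.symm
  let A : Matrix (Fin 2 ⊕ Fin m) (Fin 2 ⊕ Fin m) k :=
    Matrix.fromBlocks !![t, -1; 1, 0] 0 0 1
  let B : Matrix (Fin 2 ⊕ Fin m) (Fin 2 ⊕ Fin m) k :=
    Matrix.fromBlocks !![0, 1; -1, t] 0 0 1
  have trs : ∀ M : Matrix (Fin 2 ⊕ Fin m) (Fin 2 ⊕ Fin m) k,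
      Matrix.trace (M.submatrix e e) = Matrix.trace M := by
    intro M
    simp only [Matrix.trace, Matrix.diag, Matrix.submatrix_apply]
    exact Equiv.sum_comp e (fun i => M i i)
  have hA : (A.submatrix e e).det = 1 := by
    rw [Matrix.det_submatrix_equiv_self, Matrix.det_fromBlocks_zero₂₁]
    simp [Matrix.det_fin_two]
  have hB : (B.submatrix e e).det = 1 := by
    rw [Matrix.det_submatrix_equiv_self, Matrix.det_fromBlocks_zero₂₁]
    simp [Matrix.det_fin_two]
  have hAB : A * B = 1 := by
    simp only [A, B, Matrix.fromBlocks_multiply]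
    rw [← Matrix.fromBlocks_one]
    congr 1 <;> simp [Matrix.one_fin_two]
  let g : Matrix.SpecialLinearGroup (Fin (2 + m)) k := ⟨A.submatrix e e, hA⟩
  let h : Matrix.SpecialLinearGroup (Fin (2 + m)) k := ⟨B.submatrix e e, hB⟩
  have hgh : g * h = 1 := by
    apply Subtype.ext
    change A.submatrix e e * B.submatrix e e = 1
    rw [Matrix.submatrix_mul_equiv, hAB, Matrix.submatrix_one_equiv]
  refine ⟨g, ?_, ?_⟩
  · change Matrix.trace (A.submatrix e e) = _
    rw [trs]
    simp [A, B, Matrix.trace]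
  · rw [inv_eq_of_mul_eq_one_right hgh]
    change Matrix.trace (B.submatrix e e) = _
    rw [trs]
    simp [A, B, Matrix.trace]

/-- Over an infinite field `k` and for `r ≥ 2`, the function `g ↦ tr(g)·tr(g⁻¹)`
takes infinitely many values on `SL_r(k)`. -/
theorem infinite_adjoint_trace_values_SL
    (k : Type*) [Field k] [Infinite k] (r : ℕ) (hr : 2 ≤ r) :
    Set.Infinite {x : k | ∃ g : Matrix.SpecialLinearGroup (Fin r) k,
      Matrix.trace ((g : Matrix (Fin r) (Fin r) k)) *
        Matrix.trace ((g⁻¹ : Matrix.SpecialLinearGroup (Fin r) k) : Matrix (Fin r) (Fin r) k)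
      = x} := by
  obtain ⟨m, rfl⟩ := Nat.exists_eq_add_of_le hr
  intro hfin
  have hpre := Set.Finite.preimage' (f := fun c : k => c * c) hfin (by
    intro b _
    by_cases hb : ∃ c : k, c * c = b
    · obtain ⟨c, rfl⟩ := hb
      refine (Set.toFinite {c, -c}).subset ?_
      intro d hd
      have hd' : d * d = c * c := hd
      exact mul_self_eq_mul_self_iff.mp hd'
    · convert Set.finite_empty
      ext d
      simp only [Set.mem_preimage, Set.mem_singleton_iff, Set.mem_empty_iff_false, iff_false]
      exact fun hd => hb ⟨d, hd⟩)
  refine Set.infinite_univ (α := k) (hpre.subset ?_)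
  intro c _
  obtain ⟨g, h1, h2⟩ := adj_trace_exists_aux k m (c - m)
  refine ⟨g, ?_⟩
  rw [h1, h2]
  simp
end

section
/- Let F be a field with algebraic closure F̄ and let r ≥ 2. Call a subset Δ ⊆ SL_r(F) Zariski dense in SL_r if every polynomial f ∈ F[X₁₁,…,X_rr] in the r² matrix entries that vanishes at every element of Δ vanishes at every element of SL_r(F̄). If Δ ⊆ SL_r(F) is Zariski dense in SL_r, then the set { tr(δ)·tr(δ⁻¹) : δ ∈ Δ } is infinite. -/
lemma aux_map {R K n : Type*} [CommRing R] [CommRing K] [Fintype n] [DecidableEq n]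
    (φ : R →+* K) (A : Matrix n n R) (M : Matrix n n K) (h : A.map φ = M) :
    φ (A.trace * A.adjugate.trace) = M.trace * M.adjugate.trace := by
  subst h
  have h1 := RingHom.map_adjugate φ A
  simp only [RingHom.mapMatrix_apply] at h1
  rw [map_mul, ← h1]
  simp [Matrix.trace, map_sum]

lemma aux_trace {K n : Type*} [CommRing K] [Fintype n] [DecidableEq n] (i j : n) (hij : i ≠ j)
    (a b : K) : (Matrix.transvection i j a * Matrix.transvection j i b).trace
      = Fintype.card n + a * b := by
  simp [Matrix.transvection, mul_add, add_mul, Matrix.trace_add, hij, hij.symm,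
    Matrix.trace_single_eq_of_ne]

lemma aux_exists {K n : Type*} [CommRing K] [Fintype n] [DecidableEq n] (i j : n) (hij : i ≠ j)
    (u : K) : ∃ g : Matrix.SpecialLinearGroup n K,
      (g : Matrix n n K).trace * (g : Matrix n n K).adjugate.trace = u * u := by
  let t : K := u - Fintype.card n
  let g : Matrix.SpecialLinearGroup n K :=
    Matrix.SpecialLinearGroup.transvection hij 1 * Matrix.SpecialLinearGroup.transvection hij.symm t
  let gi : Matrix.SpecialLinearGroup n K :=
    Matrix.SpecialLinearGroup.transvection hij.symm (-t) *
      Matrix.SpecialLinearGroup.transvection hij (-1)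
  have hg : g.1 = Matrix.transvection i j 1 * Matrix.transvection j i t := rfl
  have hgi : gi.1 = Matrix.transvection j i (-t) * Matrix.transvection i j (-1) := rfl
  have h : g * gi = 1 := by
    apply Subtype.ext
    change g.1 * gi.1 = 1
    rw [hg, hgi, mul_assoc, ← mul_assoc (Matrix.transvection j i t),
      Matrix.transvection_mul_transvection_same _ _ hij.symm]
    simp [Matrix.transvection_mul_transvection_same _ _ hij]
  refine ⟨g, ?_⟩
  rw [← Matrix.SpecialLinearGroup.coe_inv, inv_eq_of_mul_eq_one_right h]
  change g.1.trace * gi.1.trace = _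
  rw [hg, hgi, aux_trace i j hij, aux_trace j i hij.symm]
  simp [t]

/-- If `Δ ⊆ SL_r(F)` (`r ≥ 2`) is Zariski dense in `SL_r` — meaning every polynomial in the
`r²` matrix entries vanishing on `Δ` vanishes on `SL_r(F̄)` for an algebraic closure `F̄`
of `F` — then `δ ↦ tr(δ)·tr(δ⁻¹)` takes infinitely many values on `Δ`. -/
theorem infinite_adjoint_trace_values_of_zariski_dense
    (F Fbar : Type*) [Field F] [Field Fbar] [Algebra F Fbar] [IsAlgClosure F Fbar]
    (r : ℕ) (hr : 2 ≤ r)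
    (Δ : Set (Matrix.SpecialLinearGroup (Fin r) F))
    (hdense : ∀ f : MvPolynomial (Fin r × Fin r) F,
      (∀ δ ∈ Δ, MvPolynomial.eval
          (fun ij => (δ : Matrix (Fin r) (Fin r) F) ij.1 ij.2) f = 0) →
      ∀ g : Matrix.SpecialLinearGroup (Fin r) Fbar,
        MvPolynomial.eval (fun ij => (g : Matrix (Fin r) (Fin r) Fbar) ij.1 ij.2)
          (MvPolynomial.map (algebraMap F Fbar) f) = 0) :
    Set.Infinite {x : F | ∃ δ ∈ Δ,
      Matrix.trace ((δ : Matrix (Fin r) (Fin r) F)) *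
        Matrix.trace ((δ⁻¹ : Matrix.SpecialLinearGroup (Fin r) F) : Matrix (Fin r) (Fin r) F)
      = x} := by
  intro hfin
  classical
  have : IsAlgClosed Fbar := IsAlgClosure.isAlgClosed F
  let A : Matrix (Fin r) (Fin r) (MvPolynomial (Fin r × Fin r) F) :=
    Matrix.of fun i j => MvPolynomial.X (i, j)
  let f : MvPolynomial (Fin r × Fin r) F :=
    ∏ s ∈ hfin.toFinset, (A.trace * A.adjugate.trace - MvPolynomial.C s)
  have key := hdense f (by
    intro δ hδ
    simp only [f, map_prod]
    refine Finset.prod_eq_zero (i := Matrix.trace (δ : Matrix (Fin r) (Fin r) F) *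
      Matrix.trace ((δ⁻¹ : Matrix.SpecialLinearGroup (Fin r) F) : Matrix (Fin r) (Fin r) F))
      ?_ ?_
    · rw [Set.Finite.mem_toFinset]
      exact ⟨δ, hδ, rfl⟩
    · rw [map_sub, aux_map _ A (δ : Matrix (Fin r) (Fin r) F) (by ext i j; simp [A]),
        MvPolynomial.eval_C, Matrix.SpecialLinearGroup.coe_inv, sub_self])
  have hsub : (Set.univ : Set Fbar) ⊆ Set.image (algebraMap F Fbar) (hfin.toFinset : Set F) := by
    intro z _
    obtain ⟨u, hu⟩ := IsAlgClosed.exists_pow_nat_eq z (n := 2) (by norm_num)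
    obtain ⟨g, hg⟩ := aux_exists (⟨0, by omega⟩ : Fin r) ⟨1, by omega⟩ (by simp) u
    have h := key g
    simp only [f, map_prod] at h
    obtain ⟨s, hs, h⟩ := Finset.prod_eq_zero_iff.mp h
    refine ⟨s, hs, ?_⟩
    have h2 := aux_map ((MvPolynomial.eval
      (fun ij : Fin r × Fin r => (g : Matrix (Fin r) (Fin r) Fbar) ij.1 ij.2)).comp
      (MvPolynomial.map (algebraMap F Fbar))) A (g : Matrix (Fin r) (Fin r) Fbar)
      (by ext i j; simp [A])
    rw [RingHom.comp_apply] at h2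
    rw [map_sub, map_sub, h2, hg, MvPolynomial.map_C, MvPolynomial.eval_C, sub_eq_zero] at h
    rw [← h, ← hu, sq]
  have : Infinite Fbar := IsAlgClosed.instInfinite
  exact Set.infinite_univ ((Set.Finite.image _ (Finset.finite_toSet _)).subset hsub)
end

section
/- Let F be a field of characteristic p > 0 that is finitely generated as a field over 𝔽_p, and let r ≥ 2. Call a subset Δ ⊆ SL_r(F) Zariski dense in SL_r if every polynomial f ∈ F[X₁₁,…,X_rr] in the r² matrix entries that vanishes at every element of Δ vanishes at every element of SL_r(F̄), where F̄ is an algebraic closure of F. If Δ ⊆ SL_r(F) is Zariski dense in SL_r, then there exists δ ∈ Δ such that tr(δ)·tr(δ⁻¹) is transcendental over 𝔽_p; in particular δ has infinite order (δⁿ ≠ 1 for all n ≥ 1). -/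
open IntermediateField.algebraAdjoinAdjoin in
theorem aux_finite (k F : Type*) [Field k] [Field F] [Algebra k F]
    [Algebra.EssFiniteType k F] : Module.Finite k (algebraicClosure k F) := by
  obtain ⟨s, hs⟩ := exists_isTranscendenceBasis k F
  have hK := hs.1.algebraicClosure
  let K := algebraicClosure k F
  let E := IntermediateField.adjoin k s
  let R := Algebra.adjoin k s
  have halg : Algebra.IsAlgebraic E F := by
    have alg := hs.isAlgebraic_field
    rwa [Subtype.range_coe] at alg
  have : Algebra.EssFiniteType E F := Algebra.EssFiniteType.of_comp k E F
  have hfin : Module.Finite E F := by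
    obtain ⟨t, ht⟩ := IntermediateField.fg_top E F
    have : FiniteDimensional E (IntermediateField.adjoin E (t : Set F)) :=
      IntermediateField.finiteDimensional_adjoin fun x _ => Algebra.IsIntegral.isIntegral x
    rw [ht] at this
    exact Module.Finite.equiv (IntermediateField.topEquiv (F := E) (E := F)).toLinearEquiv
  let b := Module.Free.chooseBasis k K
  have hli : LinearIndependent E (fun i => (b i : F)) := by
    rw [← LinearIndependent.iff_fractionRing R E, linearIndependent_iff']
    intro t g hg
    have hP : ∀ i, ∃ P : MvPolynomial s k, MvPolynomial.aeval (fun x : s => (x : F)) P = (g i : F) := by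
      intro i
      have := (g i).2
      change (g i : F) ∈ Algebra.adjoin k s at this
      rw [Algebra.adjoin_eq_range] at this
      exact this
    choose P hP using hP
    have hQ : ∑ i ∈ t, MvPolynomial.C (b i) * MvPolynomial.map (algebraMap k K) (P i) = 0 := by
      apply hK
      rw [map_zero, map_sum, ← hg]
      refine Finset.sum_congr rfl fun i _ => ?_
      rw [map_mul, MvPolynomial.aeval_C, MvPolynomial.aeval_map_algebraMap, hP, mul_comm,
        Algebra.smul_def]
      rfl
    have hz : ∀ i ∈ t, P i = 0 := by
      intro i hi
      ext m
      have h1 := congrArg (MvPolynomial.coeff m) hQ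
      simp only [MvPolynomial.coeff_sum, MvPolynomial.coeff_C_mul, MvPolynomial.coeff_map,
        MvPolynomial.coeff_zero] at h1
      rw [MvPolynomial.coeff_zero]
      refine linearIndependent_iff'.1 b.linearIndependent t (fun i => MvPolynomial.coeff m (P i)) ?_ i hi
      rw [← h1]
      refine Finset.sum_congr rfl fun i _ => ?_
      rw [Algebra.smul_def, mul_comm]
    intro i hi
    apply Subtype.ext
    rw [← hP, hz i hi, map_zero]; rfl
  have : Finite _ := hli.finite
  exact Module.Finite.of_basis b

theorem aux_set_finite (F : Type*) [Field F] (p : ℕ) [Fact p.Prime] [CharP F p]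
    (hfg : ∃ s : Finset F, Subfield.closure (s : Set F) = ⊤) :
    {x : F | IsAlgebraic (⊥ : Subfield F) x}.Finite := by
  have h1 : Field.FG F := ⟨hfg⟩
  have := Field.fg_iff_essFiniteType.1 h1
  have := aux_finite (⊥ : Subfield F) F
  have hb : Finite (⊥ : Subfield F) := by
    let := ZMod.algebra F p
    have hle : (⊥ : Subfield F) ≤ (algebraMap (ZMod p) F).fieldRange := bot_le
    exact (Set.finite_range (algebraMap (ZMod p) F)).subset hle
  have : Finite (algebraicClosure (⊥ : Subfield F) F) := Module.finite_of_finite (⊥ : Subfield F)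
  exact (Set.toFinite ((algebraicClosure (⊥ : Subfield F) F : Set F))).subset fun x hx => by
    simpa [mem_algebraicClosure_iff] using hx

theorem aux_trace_alg (k F L : Type*) [Field k] [Field F] [Field L] [Algebra k F] [Algebra F L]
    [IsAlgClosed L] (r n : ℕ) (hn : 1 ≤ n)
    (A : Matrix (Fin r) (Fin r) F) (hA : A ^ n = 1) : IsAlgebraic k A.trace := by
  let : Algebra k L := ((algebraMap F L).comp (algebraMap k F)).toAlgebra
  have : IsScalarTower k F L := .of_algebraMap_eq fun _ => rfl
  rw [← isAlgebraic_algebraMap_iff (A := L) (algebraMap F L).injective]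
  have hB : (A.map (algebraMap F L)) ^ n = 1 := by
    have := congrArg (algebraMap F L).mapMatrix hA
    rw [map_pow, map_one] at this
    exact this
  have ht : algebraMap F L A.trace = (A.map (algebraMap F L)).trace := by
    simp [Matrix.trace]
  rw [ht, Matrix.trace_eq_sum_roots_charpoly, ← mem_algebraicClosure_iff]
  refine multiset_sum_mem _ fun μ hμ => ?_
  rw [mem_algebraicClosure_iff]
  have h2 := Matrix.mem_spectrum_of_isRoot_charpoly (Polynomial.isRoot_of_mem_roots hμ)
  have hnt : Nontrivial (Matrix (Fin r) (Fin r) L) := by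
    by_contra h
    rw [not_nontrivial_iff_subsingleton] at h
    simp [spectrum.of_subsingleton] at h2
  have h3 := spectrum.pow_mem_pow _ n h2
  rw [hB, spectrum.one_eq] at h3
  have h4 : μ ^ n = 1 := h3
  exact IsAlgebraic.of_pow (n := n) hn (h4 ▸ isAlgebraic_one)

theorem aux_family (L : Type*) [Field L] (r : ℕ) (hr : 2 ≤ r) (a : L) :
    ∃ g : Matrix.SpecialLinearGroup (Fin r) L, (g : Matrix (Fin r) (Fin r) L).trace = r + a ∧
      ((g⁻¹ : Matrix.SpecialLinearGroup (Fin r) L) : Matrix (Fin r) (Fin r) L).trace = r + a := by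
  let i : Fin r := ⟨0, by omega⟩
  let j : Fin r := ⟨1, by omega⟩
  have hij : i ≠ j := by simp [i, j]
  let T : ∀ i j : Fin r, i ≠ j → L → Matrix.SpecialLinearGroup (Fin r) L :=
    fun i j h c => ⟨Matrix.transvection i j c, Matrix.det_transvection_of_ne i j h c⟩
  have hc : ∀ i j h c, (T i j h c : Matrix (Fin r) (Fin r) L) = Matrix.transvection i j c :=
    fun _ _ _ _ => rfl
  have hT : ∀ i j h c, (T i j h c)⁻¹ = T i j h (-c) := by
    intro i j h c
    rw [inv_eq_iff_mul_eq_one]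
    apply Subtype.ext
    rw [Matrix.SpecialLinearGroup.coe_mul, hc, hc,
      Matrix.transvection_mul_transvection_same i j h]
    · simp
    all_goals exact h
  refine ⟨T i j hij a * T j i hij.symm 1, ?_, ?_⟩
  · rw [Matrix.SpecialLinearGroup.coe_mul, hc, hc]
    · simp [Matrix.transvection, mul_add, add_mul, Matrix.trace_single_eq_of_ne, hij, hij.symm]
    all_goals first | exact hij | exact hij.symm
  · rw [mul_inv_rev, hT, hT, Matrix.SpecialLinearGroup.coe_mul, hc, hc]
    · simp [Matrix.transvection, mul_add, add_mul, Matrix.trace_single_eq_of_ne, hij, hij.symm]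
    all_goals first | exact hij | exact hij.symm

theorem aux_eval (F L : Type*) [Field F] [Field L] (r : ℕ)
    (φ : MvPolynomial (Fin r × Fin r) F →+* L) (g : Matrix.SpecialLinearGroup (Fin r) L)
    (h : ∀ ij, φ (MvPolynomial.X ij) = (g : Matrix (Fin r) (Fin r) L) ij.1 ij.2) :
    φ ((Matrix.mvPolynomialX (Fin r) (Fin r) F).trace *
      (Matrix.mvPolynomialX (Fin r) (Fin r) F).adjugate.trace) =
    (g : Matrix (Fin r) (Fin r) L).trace *
      ((g⁻¹ : Matrix.SpecialLinearGroup (Fin r) L) : Matrix (Fin r) (Fin r) L).trace := by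
  have h1 : φ.mapMatrix (Matrix.mvPolynomialX (Fin r) (Fin r) F) = g := by
    ext i j
    simpa using h (i, j)
  have h2 : ∀ M : Matrix (Fin r) (Fin r) (MvPolynomial (Fin r × Fin r) F),
      φ M.trace = (φ.mapMatrix M).trace := by
    intro M
    simp [Matrix.trace]
  rw [map_mul, h2, h2, RingHom.map_adjugate, h1, Matrix.SpecialLinearGroup.coe_inv]


/-- Let `F` be a field of characteristic `p > 0` which is finitely generated as a field
over its prime field `𝔽_p` (realized as `⊥ : Subfield F`), and let `r ≥ 2`.  If
`Δ ⊆ SL_r(F)` is Zariski dense in `SL_r` (every polynomial in the matrix entries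
vanishing on `Δ` vanishes on `SL_r(F̄)`), then some `δ ∈ Δ` has `tr(δ)·tr(δ⁻¹)`
transcendental over `𝔽_p`; in particular `δ` has infinite order. -/
theorem exists_transcendental_adjoint_trace_of_zariski_dense
    (F Fbar : Type*) [Field F] [Field Fbar] [Algebra F Fbar] [IsAlgClosure F Fbar]
    (p : ℕ) [Fact p.Prime] [CharP F p]
    (hfg : ∃ s : Finset F, Subfield.closure (s : Set F) = ⊤)
    (r : ℕ) (hr : 2 ≤ r)
    (Δ : Set (Matrix.SpecialLinearGroup (Fin r) F))
    (hdense : ∀ f : MvPolynomial (Fin r × Fin r) F,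
      (∀ δ ∈ Δ, MvPolynomial.eval
          (fun ij => (δ : Matrix (Fin r) (Fin r) F) ij.1 ij.2) f = 0) →
      ∀ g : Matrix.SpecialLinearGroup (Fin r) Fbar,
        MvPolynomial.eval (fun ij => (g : Matrix (Fin r) (Fin r) Fbar) ij.1 ij.2)
          (MvPolynomial.map (algebraMap F Fbar) f) = 0) :
    ∃ δ ∈ Δ,
      Transcendental (⊥ : Subfield F)
        (Matrix.trace ((δ : Matrix (Fin r) (Fin r) F)) *
          Matrix.trace ((δ⁻¹ : Matrix.SpecialLinearGroup (Fin r) F) :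
            Matrix (Fin r) (Fin r) F)) ∧
      ∀ n : ℕ, 1 ≤ n → δ ^ n ≠ 1 := by
  have hAC : IsAlgClosed Fbar := IsAlgClosure.isAlgClosed F
  have hS := aux_set_finite F p hfg
  have main : ∃ δ ∈ Δ, Transcendental (⊥ : Subfield F)
      (Matrix.trace ((δ : Matrix (Fin r) (Fin r) F)) *
        Matrix.trace ((δ⁻¹ : Matrix.SpecialLinearGroup (Fin r) F) :
          Matrix (Fin r) (Fin r) F)) := by
    by_contra hcon
    push Not at hcon
    have hinf : Infinite Fbar := IsAlgClosed.instInfinite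
    obtain ⟨b, hb⟩ := (hS.image (algebraMap F Fbar)).exists_notMem
    obtain ⟨t, ht⟩ := IsAlgClosed.exists_pow_nat_eq b (n := 2) (by norm_num)
    obtain ⟨g, hg1, hg2⟩ := aux_family Fbar r hr (t - r)
    have hz := hdense (∏ c ∈ hS.toFinset, ((Matrix.mvPolynomialX (Fin r) (Fin r) F).trace *
      (Matrix.mvPolynomialX (Fin r) (Fin r) F).adjugate.trace - MvPolynomial.C c)) ?_ g
    · rw [map_prod, map_prod, Finset.prod_eq_zero_iff] at hz
      obtain ⟨c, hc, hz⟩ := hz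
      have he := aux_eval F Fbar r
        ((MvPolynomial.eval fun ij => (g : Matrix (Fin r) (Fin r) Fbar) ij.1 ij.2).comp
          (MvPolynomial.map (algebraMap F Fbar))) g (by intro ij; simp)
      rw [RingHom.comp_apply] at he
      rw [map_sub, map_sub, he, hg1, hg2, MvPolynomial.map_C, MvPolynomial.eval_C,
        sub_eq_zero] at hz
      refine hb ⟨c, hS.mem_toFinset.1 hc, ?_⟩
      rw [← hz, ← ht]
      ring
    · intro δ hδ
      rw [map_prod, Finset.prod_eq_zero_iff]
      have hd := hcon δ hδ
      rw [Transcendental, not_not] at hd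
      refine ⟨_, hS.mem_toFinset.2 hd, ?_⟩
      rw [map_sub, aux_eval F F r (MvPolynomial.eval _) δ (by intro ij; simp),
        MvPolynomial.eval_C, sub_self]
  obtain ⟨δ, hδ, htr⟩ := main
  refine ⟨δ, hδ, htr, fun n hn hpow => htr ?_⟩
  refine IsAlgebraic.mul (aux_trace_alg _ F Fbar r n hn _ ?_) (aux_trace_alg _ F Fbar r n hn _ ?_)
  · rw [← Matrix.SpecialLinearGroup.coe_pow, hpow, Matrix.SpecialLinearGroup.coe_one]
  · rw [← Matrix.SpecialLinearGroup.coe_pow, inv_pow, hpow, inv_one,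
      Matrix.SpecialLinearGroup.coe_one]
end

section
/- Let L ⊆ K be a finitely generated field extension, let K^sep be a separable closure of K, and let L^sep be the separable closure of L inside K^sep. Then the image of the restriction homomorphism Gal(K^sep/K) → Gal(L^sep/L) is an open subgroup of Gal(L^sep/L) for the Krull topology. -/
open scoped IntermediateField.algebraAdjoinAdjoin in
/-- The relative algebraic closure of `L` in a finitely generated extension is finite. -/
theorem finite_algebraicClosure_of_essFiniteType (L K : Type*) [Field L] [Field K] [Algebra L K]
    [Algebra.EssFiniteType L K] : FiniteDimensional L (algebraicClosure L K) := by
  obtain ⟨s, hs⟩ := exists_isTranscendenceBasis L K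
  set x : s → K := Subtype.val with hx
  let F := IntermediateField.adjoin L (Set.range x)
  let A := Algebra.adjoin L (Set.range x)
  have halg : Algebra.IsAlgebraic F K := hs.isAlgebraic_field
  have hess : Algebra.EssFiniteType F K := Algebra.EssFiniteType.of_comp L F K
  have hfin : Module.Finite F K := Algebra.finite_of_essFiniteType_of_isAlgebraic
  have hE : AlgebraicIndependent (algebraicClosure L K) x := hs.1.algebraicClosure
  let b := Module.Basis.ofVectorSpace L (algebraicClosure L K)
  have hA : LinearIndependent A (fun i => (b i : K)) := by
    rw [linearIndependent_iff']
    intro t g hg i hi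
    choose p hp using fun i => hs.1.aevalEquiv.surjective (g i)
    have hp' : ∀ i, MvPolynomial.aeval x (p i) = (g i : K) := fun i => by
      rw [← hp i]; simp
    let q : MvPolynomial s (algebraicClosure L K) :=
      ∑ i ∈ t, MvPolynomial.C (b i) * MvPolynomial.map (algebraMap L _) (p i)
    have hq : MvPolynomial.aeval x q = 0 := by
      rw [← hg]
      simp only [q, map_sum, map_mul, MvPolynomial.aeval_map_algebraMap, hp']
      refine Finset.sum_congr rfl fun i _ => ?_
      rw [MvPolynomial.aeval_C, mul_comm]
      rfl
    have hq0 : q = 0 := hE (by rw [hq, map_zero])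
    have hp0 : p i = 0 := by
      ext m
      have hm := congrArg (MvPolynomial.coeff m) hq0
      simp only [q, MvPolynomial.coeff_sum, MvPolynomial.coeff_C_mul, MvPolynomial.coeff_map,
        MvPolynomial.coeff_zero] at hm
      have := linearIndependent_iff'.1 b.linearIndependent t
        (fun i => MvPolynomial.coeff m (p i)) (by
          rw [← hm]
          refine Finset.sum_congr rfl fun i _ => ?_
          rw [Algebra.smul_def, mul_comm]) i hi
      simpa using this
    rw [← hp i, hp0, map_zero]
  have hF : LinearIndependent F (fun i => (b i : K)) :=
    (LinearIndependent.iff_fractionRing A F).1 hA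
  have := hF.finite
  exact Module.Finite.of_basis b

/-- An automorphism fixing generators fixes the generated field. -/
theorem mem_fixingSubgroup_adjoin {F E : Type*} [Field F] [Field E] [Algebra F E]
    (t : Finset E) (f : E ≃ₐ[F] E) (h : ∀ y ∈ t, f y = y) :
    f ∈ (IntermediateField.adjoin F (t : Set E)).fixingSubgroup := by
  rw [IntermediateField.mem_fixingSubgroup_iff]
  exact (IntermediateField.forall_mem_adjoin_smul_eq_self_iff F (S := (t : Set E)) f).2 h

/-- Let `L ⊆ K` be a finitely generated field extension, `Ω = K^sep` a separable closure
of `K`, and `L^sep = separableClosure L Ω` the separable closure of `L` inside `Ω`.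
Then the image of the restriction homomorphism `Gal(K^sep/K) → Gal(L^sep/L)` is an open
subgroup of `Gal(L^sep/L)` for the Krull topology. -/
theorem restriction_image_isOpen_of_fg
    (L K Ω : Type*) [Field L] [Field K] [Field Ω]
    [Algebra L K] [Algebra K Ω] [Algebra L Ω] [IsScalarTower L K Ω]
    [IsSepClosed Ω] [IsSepClosure K Ω]
    (hfg : ∃ s : Finset K, IntermediateField.adjoin L (s : Set K) = ⊤) :
    IsOpen (Set.range fun σ : Ω ≃ₐ[K] Ω =>
      AlgEquiv.restrictNormalHom (F := L) (K₁ := Ω) (separableClosure L Ω)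
        (σ.restrictScalars L)) := by
  have hess : Algebra.EssFiniteType L K := IntermediateField.fg_top_iff.1 hfg
  have hE := finite_algebraicClosure_of_essFiniteType L K
  let φ : (Ω ≃ₐ[K] Ω) →* (separableClosure L Ω ≃ₐ[L] separableClosure L Ω) :=
    (AlgEquiv.restrictNormalHom (F := L) (K₁ := Ω) (separableClosure L Ω)).comp
      (AlgEquiv.restrictScalarsHom L)
  have hφ : ∀ σ (y : separableClosure L Ω), ((φ σ y : separableClosure L Ω) : Ω) = σ y :=
    fun σ y => AlgEquiv.restrictNormal_commutes (σ.restrictScalars L) (separableClosure L Ω) y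
  have hcont : Continuous φ := by
    apply continuous_of_continuousAt_one _ (continuousAt_def.mpr _)
    intro N hN
    rw [map_one, krullTopology_mem_nhds_one_iff] at hN
    obtain ⟨L', hL', hO⟩ := hN
    obtain ⟨t, ht⟩ : L'.FG := IntermediateField.essFiniteType_iff.1 inferInstance
    have hopen : (⋂ y ∈ t, (MulAction.stabilizer (Ω ≃ₐ[K] Ω) (y : Ω) : Set (Ω ≃ₐ[K] Ω)))
        ∈ nhds (1 : Ω ≃ₐ[K] Ω) := by
      refine (Filter.biInter_finset_mem t).2 fun y _ => ?_
      exact (stabilizer_isOpen_of_isIntegral (K := K) (L := Ω) (y : Ω)).mem_nhds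
        (one_mem _)
    refine Filter.mem_of_superset hopen fun σ hσ => hO ?_
    have key : ∀ y ∈ t, φ σ y = y := fun y hy =>
      Subtype.ext ((hφ σ y).trans (Set.mem_iInter₂.1 hσ y hy))
    rw [SetLike.mem_coe, ← ht]
    exact mem_fixingSubgroup_adjoin t (φ σ) key
  have hclosed : IsClosed (φ.range : Set (separableClosure L Ω ≃ₐ[L] separableClosure L Ω)) := by
    rw [MonoidHom.coe_range]
    exact (isCompact_range hcont).isClosed
  have hfix := InfiniteGalois.fixingSubgroup_fixedField
    (⟨φ.range, hclosed⟩ : ClosedSubgroup (separableClosure L Ω ≃ₐ[L] separableClosure L Ω))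
  let M := IntermediateField.fixedField φ.range
  have hle : IntermediateField.lift M ≤
      (algebraicClosure L K).map (IsScalarTower.toAlgHom L K Ω) := by
    intro z hz
    have hzS : z ∈ separableClosure L Ω := IntermediateField.lift_le M hz
    have hzM : (⟨z, hzS⟩ : separableClosure L Ω) ∈ M :=
      (IntermediateField.mem_lift (⟨z, hzS⟩ : separableClosure L Ω)).1 hz
    rw [IntermediateField.mem_fixedField_iff] at hzM
    obtain ⟨y, rfl⟩ := (InfiniteGalois.mem_range_algebraMap_iff_fixed (k := K) z).2 fun σ => by
      have := congrArg Subtype.val (hzM (φ σ) ⟨σ, rfl⟩)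
      rwa [hφ] at this
    refine ⟨y, ?_, rfl⟩
    have : IsIntegral L (algebraMap K Ω y) := (mem_separableClosure_iff.1 hzS).isIntegral
    exact mem_algebraicClosure_iff.2
      ((isIntegral_algebraMap_iff (algebraMap K Ω).injective).1 this).isAlgebraic
  have hfd1 : FiniteDimensional L ((algebraicClosure L K).map (IsScalarTower.toAlgHom L K Ω)) :=
    Module.Finite.equiv
      ((algebraicClosure L K).equivMap (IsScalarTower.toAlgHom L K Ω)).toLinearEquiv
  have hfd2 : FiniteDimensional L (IntermediateField.lift M) :=
    FiniteDimensional.of_injective (IntermediateField.inclusion hle).toLinearMap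
      (IntermediateField.inclusion hle).injective
  have hfd : FiniteDimensional L M :=
    Module.Finite.equiv (IntermediateField.liftAlgEquiv M).symm.toLinearEquiv
  have hopen := IntermediateField.fixingSubgroup_isOpen M
  have h2 : M.fixingSubgroup = φ.range := hfix
  rw [h2] at hopen
  exact hopen
end

section
/- Let K be a field equipped with a nontrivial nonarchimedean absolute value, and give K^(r²) and GL_r(K) ⊆ K^(r²) the resulting topology. If a polynomial f ∈ K[X₁₁,…,X_rr] in the r² matrix entries vanishes at every element of an open subgroup U of GL_r(K), then f is the zero polynomial; in particular, an open subgroup of GL_r(K) is Zariski dense in GL_r, i.e. every polynomial over K vanishing on U vanishes on GL_r(K̄) for any algebraic closure K̄ of K. -/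
open scoped MatrixGroups

/-- Let `K` be a field with a nontrivial nonarchimedean absolute value, and let `U` be a
subgroup of `GL_r(K)` which is open for the topology induced by the absolute value on the
`r²` matrix entries.  If a polynomial `f` in the matrix entries vanishes at every element
of `U`, then `f = 0`; in particular `f` (base-changed) vanishes at every element of
`GL_r(K̄)` for any algebraic closure `K̄` of `K`. -/
theorem polynomial_zero_of_vanishing_on_open_subgroup
    (K Kbar : Type*) [Field K] [Field Kbar] [Algebra K Kbar] [IsAlgClosure K Kbar]
    (v : AbsoluteValue K ℝ)
    (hna : ∀ x y : K, v (x + y) ≤ max (v x) (v y))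
    (hnt : ∃ x : K, x ≠ 0 ∧ v x ≠ 1)
    (r : ℕ)
    (U : Subgroup (GL (Fin r) K))
    (hopen : ∀ g ∈ U, ∃ ε > (0 : ℝ), ∀ h : GL (Fin r) K,
      (∀ i j, v ((h : Matrix (Fin r) (Fin r) K) i j - (g : Matrix (Fin r) (Fin r) K) i j) < ε)
        → h ∈ U)
    (f : MvPolynomial (Fin r × Fin r) K)
    (hf : ∀ g ∈ U, MvPolynomial.eval
      (fun ij => (g : Matrix (Fin r) (Fin r) K) ij.1 ij.2) f = 0) :
    f = 0 ∧ ∀ g : GL (Fin r) Kbar,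
      MvPolynomial.eval (fun ij => (g : Matrix (Fin r) (Fin r) Kbar) ij.1 ij.2)
        (MvPolynomial.map (algebraMap K Kbar) f) = 0 := by
  have h0 : f = 0 := by
    obtain ⟨ε, hε, hU⟩ := hopen 1 U.one_mem
    have hpi : ∃ x : K, 0 < v x ∧ v x < 1 := by
      obtain ⟨x, hx0, hx1⟩ := hnt
      rcases lt_or_gt_of_ne hx1 with h | h
      · exact ⟨x, v.pos hx0, h⟩
      · refine ⟨x⁻¹, v.pos (inv_ne_zero hx0), ?_⟩
        rw [map_inv₀]
        exact inv_lt_one_of_one_lt₀ h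
    obtain ⟨p, hp0, hp1⟩ := hpi
    obtain ⟨N, hN⟩ := exists_pow_lt_of_lt_one hε hp1
    have hinf : ∀ c : K, {x : K | v (x - c) < ε}.Infinite := by
      intro c
      refine Set.infinite_of_injective_forall_mem (f := fun n : ℕ => p ^ (N + n) + c) ?_ ?_
      · intro a b hab
        have h1 : p ^ (N + a) = p ^ (N + b) := add_right_cancel hab
        have h2 : v p ^ (N + a) = v p ^ (N + b) := by
          rw [← map_pow, ← map_pow, h1]
        have h3 := pow_right_injective₀ hp0 hp1.ne h2
        omega
      · intro n
        change v (p ^ (N + n) + c - c) < ε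
        rw [add_sub_cancel_right, map_pow]
        exact (pow_le_pow_of_le_one hp0.le hp1.le (Nat.le_add_right N n)).trans_lt hN
    have hprod : f * (Matrix.mvPolynomialX (Fin r) (Fin r) K).det = 0 := by
      refine MvPolynomial.funext_set
        (fun ij : Fin r × Fin r => {x : K | v (x - (1 : Matrix (Fin r) (Fin r) K) ij.1 ij.2) < ε})
        (fun _ => hinf _) ?_
      intro x hx
      have hdet : MvPolynomial.eval x (Matrix.mvPolynomialX (Fin r) (Fin r) K).det
          = (Matrix.of fun i j => x (i, j)).det := by
        rw [RingHom.map_det]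
        congr 1
        ext i j
        simp
      rw [map_mul, map_zero, hdet]
      by_cases hd : (Matrix.of fun i j => x (i, j)).det = 0
      · rw [hd, mul_zero]
      · have hg := hf (Matrix.GeneralLinearGroup.mkOfDetNeZero _ hd) (hU _ (by
          intro i j
          exact hx (i, j) (Set.mem_univ _)))
        have : MvPolynomial.eval x f = 0 := hg
        rw [this, zero_mul]
    exact (mul_eq_zero.mp hprod).resolve_right (Matrix.det_mvPolynomialX_ne_zero (Fin r) K)
  refine ⟨h0, fun g => ?_⟩
  rw [h0, map_zero, map_zero]
end
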